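/- arXiv:1908.00649 — 3 statements merged into one kernel-verified Lean document; each statement's English description precedes it below -/
import Mathlib

section
/- Let G be a Grothendieck category, X a finitely presented object, and (Y_i)_{i∈I} a direct system in G. Then the canonical morphism colim Ext¹(X, Y_i) ⟶ Ext¹(X, colim Y_i) is a monomorphism of abelian groups. -/
/-!
STATEMENT 2: Let `G` be a Grothendieck category, `X` a finitely presented
object, and `(Y_i)` a direct system in `G`.  Then the canonical morphism
`colim Ext¹(X, Y_i) ⟶ Ext¹(X, colim Y_i)` is a monomorphism of abelian
groups.

Since the colimit of the filtered system of abelian groups `Ext¹(X, Y_i)`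
(with transition maps induced by the system) maps to `Ext¹(X, colim Y_i)` via
the maps induced by the colimit cocone, injectivity of the canonical morphism
is equivalent to the element-wise statement: whenever a class
`e ∈ Ext¹(X, Y_i)` dies in `Ext¹(X, colim Y_i)`, it already dies at some
later stage `j ≥ i` of the system.  This is how the statement is formalized.
-/

open CategoryTheory Limits Opposite Abelian

universe w v u

/-- `Hom(X, -)` preserves filtered colimits. -/
def FinitelyPresented {C : Type u} [Category.{v} C] (X : C) : Prop :=
  ∀ (J : Type v) [SmallCategory J] [IsFiltered J] (D : J ⥤ C) (c : Cocone D),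
    Nonempty (IsColimit c) →
      Nonempty (IsColimit ((coyoneda.obj (op X)).mapCocone c))

/-- In an abelian category with enough injectives, every class in `Ext¹(X, Y)` is the class of
an extension of `X` by `Y`. -/
theorem exists_shortExact_extClass_eq {C : Type u} [Category.{v} C] [Abelian C] [HasExt.{w} C]
    [EnoughInjectives C] {X Y : C} (e : Ext X Y 1) :
    ∃ (E : C) (f : Y ⟶ E) (g : E ⟶ X) (zero : f ≫ g = 0)
      (h : (ShortComplex.mk f g zero).ShortExact), h.extClass = e := by
  let S := ShortComplex.mk _ _ (cokernel.condition (Injective.ι Y))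
  have hS : S.ShortExact := { exact := ShortComplex.exact_of_g_is_cokernel _ (cokernelIsCokernel _) }
  obtain ⟨x, hx⟩ := Ext.covariant_sequence_exact₁ X hS e (Ext.eq_zero_of_injective _) rfl
  obtain ⟨q, rfl⟩ := Ext.addEquiv₀.symm.surjective x
  let l : Y ⟶ pullback S.g q := pullback.lift S.f 0 (by simp [S.zero])
  have zero : l ≫ pullback.snd S.g q = 0 := pullback.lift_snd _ _ _
  have hfst : l ≫ pullback.fst S.g q = S.f := pullback.lift_fst _ _ _
  have := hS.mono_f
  have := hS.epi_g
  have : Mono l := mono_of_mono_fac hfst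
  have exact : (ShortComplex.mk l (pullback.snd S.g q) zero).Exact := by
    rw [ShortComplex.exact_iff_exact_up_to_refinements]
    intro A x₂ hx₂
    refine ⟨A, 𝟙 A, inferInstance, hS.exact.lift (x₂ ≫ pullback.fst S.g q) ?_, ?_⟩
    · dsimp at hx₂
      rw [Category.assoc, pullback.condition, reassoc_of% hx₂, zero_comp]
    · dsimp at hx₂ ⊢
      apply pullback.hom_ext
      · simp [hfst]
      · simp [zero, hx₂]
  have hT : (ShortComplex.mk l (pullback.snd S.g q) zero).ShortExact := { exact := exact }
  refine ⟨_, _, _, zero, hT, ?_⟩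
  have := ShortComplex.ShortExact.extClass_naturality hT hS
    { τ₁ := 𝟙 Y
      τ₂ := pullback.fst S.g q
      τ₃ := q
      comm₁₂ := by simp [S, hfst]
      comm₂₃ := pullback.condition }
  rw [← hx]
  simpa using this

/-- The pushforward of an extension along `a` splits if and only if `a` extends to the middle
term. -/
theorem extClass_comp_mk₀_eq_zero_iff {C : Type u} [Category.{v} C] [Abelian C] [HasExt.{w} C]
    {S : ShortComplex C} (hS : S.ShortExact) {Y : C} (a : S.X₁ ⟶ Y) :
    hS.extClass.comp (Ext.mk₀ a) (add_zero 1) = 0 ↔ ∃ b : S.X₂ ⟶ Y, S.f ≫ b = a := by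
  constructor
  · intro h
    obtain ⟨x, hx⟩ := Ext.contravariant_sequence_exact₁ hS _ _ _ h
    obtain ⟨b, rfl⟩ := Ext.addEquiv₀.symm.surjective x
    exact ⟨b, (Ext.mk₀_bijective _ _).1 (by simpa using hx)⟩
  · rintro ⟨b, rfl⟩
    rw [← Ext.mk₀_comp_mk₀, hS.extClass_comp_assoc]

/-- If the projection from a pushout of an extension onto the quotient has a section, then the
morphism along which the extension is pushed out extends to the middle term. -/
theorem exists_extension_of_section_pushout {C : Type u} [Category.{v} C] [Abelian C]
    {S : ShortComplex C} (hS : S.ShortExact) {Y : C} (a : S.X₁ ⟶ Y)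
    (t : S.X₃ ⟶ pushout a S.f)
    (ht : t ≫ pushout.desc 0 S.g (by simp) = 𝟙 S.X₃) :
    ∃ b : S.X₂ ⟶ Y, S.f ≫ b = a := by
  have := hS.mono_f
  have := hS.epi_g
  let p : pushout a S.f ⟶ S.X₃ := pushout.desc 0 S.g (by simp)
  have zero : pushout.inl a S.f ≫ p = 0 := pushout.inl_desc _ _ _
  have inr_p : pushout.inr a S.f ≫ p = S.g := pushout.inr_desc _ _ _
  have : Epi p := epi_of_epi_fac inr_p
  have exact : (ShortComplex.mk _ _ zero).Exact := by
    refine ShortComplex.exact_of_g_is_cokernel _ (CokernelCofork.IsColimit.ofπ' _ _ ?_)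
    intro A k hk
    have hk' : S.f ≫ pushout.inr a S.f ≫ k = 0 := by
      rw [← pushout.condition_assoc, hk, comp_zero]
    refine ⟨hS.exact.desc (pushout.inr a S.f ≫ k) hk', ?_⟩
    apply pushout.hom_ext
    · rw [reassoc_of% zero, hk, zero_comp]
    · rw [reassoc_of% inr_p]
      exact hS.exact.g_desc _ hk'
  have hr : (pushout.inr a S.f - S.g ≫ t) ≫ p = 0 := by
    simp only [Preadditive.sub_comp, Category.assoc]
    rw [inr_p, ht, Category.comp_id, sub_self]
  have hmono : Mono (ShortComplex.mk _ _ zero).f := inferInstanceAs (Mono (pushout.inl a S.f))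
  refine ⟨exact.lift _ hr, ?_⟩
  rw [← cancel_mono (pushout.inl a S.f), Category.assoc]
  have := exact.lift_f _ hr
  dsimp at this
  rw [this]
  simp [pushout.condition]

/-- If `Hom(X, -)` preserves filtered colimits and `S` is an extension of `X` by a term `D.obj i`
of a filtered system such that the morphism to the colimit extends to the middle term of `S`, then
already some transition morphism `D.obj i ⟶ D.obj j` does. -/
theorem exists_extension_of_extension_colimit {C : Type u} [Category.{v} C] [Abelian C]
    {X : C} (hX : FinitelyPresented X) {J : Type v} [SmallCategory J] [IsFiltered J]
    {D : J ⥤ C} {c : Cocone D} (hc : IsColimit c) {i : J}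
    {E : C} {f : D.obj i ⟶ E} {g : E ⟶ X} {zero : f ≫ g = 0}
    (hS : (ShortComplex.mk f g zero).ShortExact) (b : E ⟶ c.pt) (hb : f ≫ b = c.ι.app i) :
    ∃ (j : J) (φ : i ⟶ j) (b' : E ⟶ D.obj j), f ≫ b' = D.map φ := by
  have := hS.epi_g
  let F : Under (D.obj i) ⥤ C := Under.pushout f ⋙ Under.forget E
  have hc' : IsColimit (F.mapCocone (c.underPost i)) :=
    isColimitOfPreserves (Under.forget E)
      (isColimitOfPreserves (Under.pushout f) (hc.underPost i))
  obtain ⟨hc''⟩ := hX _ _ _ ⟨hc'⟩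
  have hs : f ≫ (pushout.inr (c.ι.app i) f - b ≫ pushout.inl (c.ι.app i) f) = 0 := by
    rw [Preadditive.comp_sub, reassoc_of% hb, pushout.condition, sub_self]
  let s : X ⟶ pushout (c.ι.app i) f := hS.exact.desc _ hs
  have hgs : g ≫ s = pushout.inr (c.ι.app i) f - b ≫ pushout.inl (c.ι.app i) f :=
    hS.exact.g_desc _ hs
  have hp : s ≫ pushout.desc 0 g (by simp [zero]) = 𝟙 X := by
    have : Epi g := hS.epi_g
    rw [← cancel_epi g, reassoc_of% hgs]
    simp [pushout.inl_desc, pushout.inr_desc]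
  obtain ⟨k, (t : X ⟶ pushout (D.map k.hom) f), ht⟩ :=
    Types.jointly_surjective_of_isColimit hc'' s
  let r : pushout (D.map k.hom) f ⟶ pushout (c.ι.app i) f :=
    pushout.desc (c.ι.app k.right ≫ pushout.inl (c.ι.app i) f) (pushout.inr (c.ι.app i) f)
      ((c.w_assoc k.hom _).trans pushout.condition)
  replace ht : t ≫ r = s := ht
  have hr : r ≫ pushout.desc 0 g (by simp [zero]) = pushout.desc 0 g (by simp [zero]) := by
    apply pushout.hom_ext <;> simp [r, pushout.inl_desc, pushout.inr_desc,
      pushout.inl_desc_assoc, pushout.inr_desc_assoc]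
  have ht' : t ≫ pushout.desc 0 g (by simp [zero]) = 𝟙 X := by
    rw [← hp, ← ht, Category.assoc, hr]
  obtain ⟨b', hb'⟩ := exists_extension_of_section_pushout hS (D.map k.hom) t ht'
  exact ⟨k.right, k.hom, b', hb'⟩

theorem colimit_ext_one_mono
    {C : Type u} [Category.{v} C] [Abelian C] [HasColimits C] [AB5 C]
    [HasExt.{w} C]
    (hsep : ∃ G : C, IsSeparator G)
    (X : C) (hX : FinitelyPresented X)
    (J : Type v) [SmallCategory J] [IsFiltered J]
    (D : J ⥤ C) (c : Cocone D) (hc : IsColimit c)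
    (i : J) (e : Ext X (D.obj i) 1)
    (he : e.comp (Ext.mk₀ (c.ι.app i)) (add_zero 1) = 0) :
    ∃ (j : J) (φ : i ⟶ j), e.comp (Ext.mk₀ (D.map φ)) (add_zero 1) = 0 := by
  obtain ⟨G, hG⟩ := hsep
  have : HasSeparator C := ⟨G, hG⟩
  have : IsGrothendieckAbelian.{v} C := {}
  have : EnoughInjectives C := IsGrothendieckAbelian.enoughInjectives.{v}
  obtain ⟨E, f, g, zero, hS, rfl⟩ := exists_shortExact_extClass_eq e
  obtain ⟨b, hb⟩ := (extClass_comp_mk₀_eq_zero_iff hS _).1 he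
  obtain ⟨j, φ, b', hb'⟩ := exists_extension_of_extension_colimit hX hc hS b hb
  exact ⟨j, φ, (extClass_comp_mk₀_eq_zero_iff hS _).2 ⟨b', hb'⟩⟩
end

section
/- Let G be a Grothendieck category and t = (T, F) a torsion pair. Given a short exact sequence 0 → F → K → T → 0 with F ∈ F and T ∈ T, consider the induced morphism T[0] → F[1] in the heart H_t of the Happel-Reiten-Smalø t-structure on D(G). Then the kernel of this morphism in the abelian category H_t is t(K)[0]. -/
/-!
STATEMENT 14: Let `G` be a Grothendieck category and `t = (T, F)` a torsion
pair.  Given a short exact sequence `0 → F₁ → K → T₃ → 0` with `F₁ ∈ F` and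
`T₃ ∈ T`, consider the induced (connecting) morphism `T₃[0] → F₁[1]` in the
heart `H_t` of the Happel-Reiten-Smalø t-structure on `D(G)`.  Then the
kernel of this morphism in the abelian category `H_t` is `t(K)[0]`.

The heart is the full subcategory of `D(G)` of complexes `X` with
`H⁻¹(X) ∈ F`, `H⁰(X) ∈ T` and all other cohomologies zero; since the
hom-sets of the full subcategory coincide with those of `D(G)`, the kernel
statement is expressed as a universal property among objects of the heart.
The torsion subobject `t(K)` of `K` is specified by a short exact sequence
`0 → tK → K → K/tK → 0` with `tK ∈ T` and `K/tK ∈ F`.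
-/

open CategoryTheory Limits Opposite DerivedCategory

universe w v u

variable {C : Type u} [Category.{v} C]

/-- A torsion pair on an abelian category, as a pair of classes of objects. -/
structure IsTorsionPair [Abelian C] (T F : C → Prop) : Prop where
  torsion_iff : ∀ X : C, T X ↔ ∀ (Y : C), F Y → ∀ f : X ⟶ Y, f = 0
  torsionFree_iff : ∀ Y : C, F Y ↔ ∀ (X : C), T X → ∀ f : X ⟶ Y, f = 0
  exists_seq : ∀ X : C, ∃ (A B : C) (i : A ⟶ X) (p : X ⟶ B) (w : i ≫ p = 0),
    T A ∧ F B ∧ (ShortComplex.mk i p w).ShortExact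

/-- Membership in the heart of the Happel-Reiten-Smalø t-structure
associated with a torsion pair `(T, F)`: `H⁻¹ ∈ F`, `H⁰ ∈ T` and all other
cohomologies vanish. -/
def HeartProp [Abelian C] [HasDerivedCategory.{w} C] (T F : C → Prop)
    (X : DerivedCategory C) : Prop :=
  (∃ T₀ : C, T T₀ ∧ Nonempty ((DerivedCategory.homologyFunctor C 0).obj X ≅ T₀)) ∧
  (∃ F₀ : C, F F₀ ∧ Nonempty ((DerivedCategory.homologyFunctor C (-1)).obj X ≅ F₀)) ∧
  (∀ n : ℤ, n ≠ -1 → n ≠ 0 → IsZero ((DerivedCategory.homologyFunctor C n).obj X))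

namespace IsTorsionPair

variable [Abelian C] {T F : C → Prop}

lemma torsion_of_isZero (htp : IsTorsionPair T F) {X : C} (hX : IsZero X) : T X :=
  (htp.torsion_iff X).2 fun _ _ f ↦ hX.eq_of_src f 0

lemma torsionFree_of_isZero (htp : IsTorsionPair T F) {X : C} (hX : IsZero X) : F X :=
  (htp.torsionFree_iff X).2 fun _ _ f ↦ hX.eq_of_tgt f 0

lemma eq_zero (htp : IsTorsionPair T F) {X Y : C} (hX : T X) (hY : F Y) (f : X ⟶ Y) : f = 0 :=
  (htp.torsion_iff X).1 hX Y hY f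

end IsTorsionPair

namespace HeartProp

variable [Abelian C] [HasDerivedCategory.{w} C] {T F : C → Prop}

lemma isLE {Z : DerivedCategory C} (hZ : HeartProp.{w} T F Z) : Z.IsLE 0 := by
  rw [isLE_iff]
  intro i hi
  exact hZ.2.2 i (by lia) (by lia)

lemma singleFunctor_obj (htp : IsTorsionPair T F) {X : C} (hX : T X) :
    HeartProp.{w} T F ((singleFunctor C 0).obj X) := by
  refine ⟨⟨X, hX, ⟨(singleFunctorCompHomologyFunctorIso C 0).app X⟩⟩,
    ⟨_, htp.torsionFree_of_isZero (isZero_of_isGE _ 0 (-1) (by lia)), ⟨Iso.refl _⟩⟩, ?_⟩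
  intro n _ hn
  rcases lt_or_gt_of_ne hn with h | h
  · exact isZero_of_isGE _ 0 n h
  · exact isZero_of_isLE _ 0 n h

lemma singleFunctor_obj_shift (htp : IsTorsionPair T F) {X : C} (hX : F X) :
    HeartProp.{w} T F (((singleFunctor C 0).obj X)⟦(1 : ℤ)⟧) := by
  have : (((singleFunctor C 0).obj X)⟦(1 : ℤ)⟧).IsLE (-1) :=
    TStructure.t.isLE_shift _ 0 1 (-1)
  have : (((singleFunctor C 0).obj X)⟦(1 : ℤ)⟧).IsGE (-1) :=
    TStructure.t.isGE_shift _ 0 1 (-1)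
  have e := ((homologyFunctor C 0).shiftIso 1 (-1) 0 (by lia)).app ((singleFunctor C 0).obj X)
  rw [Functor.comp_obj, shift_homologyFunctor, shift_homologyFunctor] at e
  refine ⟨⟨_, htp.torsion_of_isZero (isZero_of_isLE _ (-1) 0 (by lia)), ⟨Iso.refl _⟩⟩,
    ⟨X, hX, ⟨e ≪≫ (singleFunctorCompHomologyFunctorIso C 0).app X⟩⟩, ?_⟩
  intro n hn _
  rcases lt_or_gt_of_ne hn with h | h
  · exact isZero_of_isGE _ (-1) n h
  · exact isZero_of_isLE _ (-1) n h

lemma hom_singleFunctor_obj_eq_zero (htp : IsTorsionPair T F) {Z : DerivedCategory C}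
    (hZ : HeartProp.{w} T F Z) {Y : C} (hY : F Y) (f : Z ⟶ (singleFunctor C 0).obj Y) :
    f = 0 := by
  obtain ⟨A, B, hA, hB, i, p, d, hd⟩ := TStructure.t.exists_triangle Z (-1) 0 (by lia)
  have : A.IsLE (-1) := ⟨hA⟩
  have : B.IsGE 0 := ⟨hB⟩
  have := hZ.isLE
  have hp : Epi ((homologyFunctor C 0).map p) :=
    (HomologySequence.epi_homologyMap_mor₂_iff _ hd 0 1).2
      ((isZero_of_isLE A (-1) 1 (by lia)).eq_of_tgt _ _)
  have : B.IsLE 0 := by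
    rw [isLE_iff]
    intro n hn
    exact (HomologySequence.exact₃ _ hd n (n + 1)).isZero_of_both_zeros
      ((isZero_of_isLE Z 0 n hn).eq_of_src _ _)
      ((isZero_of_isLE A (-1) (n + 1) (by lia)).eq_of_tgt _ _)
  obtain ⟨D, ⟨e⟩⟩ := exists_iso_singleFunctor_obj_of_isGE_of_isLE B 0
  obtain ⟨g, hg⟩ : ∃ g : B ⟶ (singleFunctor C 0).obj Y, f = p ≫ g :=
    Pretriangulated.Triangle.yoneda_exact₂ _ hd f (TStructure.t.zero (X := A) _ (-1) 0)
  obtain ⟨φ, hφ⟩ := (singleFunctor C 0).map_surjective (e.inv ≫ g)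
  obtain ⟨T₀, hT₀, ⟨eT⟩⟩ := hZ.1
  have : Epi (eT.inv ≫ (homologyFunctor C 0).map p ≫ (homologyFunctor C 0).map e.hom ≫
      (singleFunctorCompHomologyFunctorIso C 0).hom.app D) := inferInstance
  have hφ₀ : φ = 0 := by
    rw [← cancel_epi (eT.inv ≫ (homologyFunctor C 0).map p ≫ (homologyFunctor C 0).map e.hom ≫
      (singleFunctorCompHomologyFunctorIso C 0).hom.app D), comp_zero]
    exact htp.eq_zero hT₀ hY _
  rw [hφ₀, Functor.map_zero] at hφ
  rw [hg, ← e.hom_inv_id_assoc g, ← hφ, comp_zero, comp_zero]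

end HeartProp

/-- The embedding of an abelian category in degree `0` of the derived category is left exact
as seen from objects concentrated in nonpositive degrees. -/
lemma CategoryTheory.ShortComplex.ShortExact.eq_zero_of_comp_singleFunctor_map_f_eq_zero
    [Abelian C] [HasDerivedCategory.{w} C] {S : ShortComplex C} (hS : S.ShortExact)
    {Z : DerivedCategory C} [Z.IsLE 0] (f : Z ⟶ (singleFunctor C 0).obj S.X₁)
    (hf : f ≫ (singleFunctor C 0).map S.f = 0) : f = 0 := by
  have : (((singleFunctor C 0).obj S.X₃)⟦(-1 : ℤ)⟧).IsGE 1 :=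
    TStructure.t.isGE_shift _ 0 (-1) 1
  obtain ⟨g, hg⟩ := Pretriangulated.Triangle.coyoneda_exact₂ _
    (Pretriangulated.inv_rot_of_distTriang _ hS.singleTriangle_distinguished) f hf
  have hg₀ : g = 0 :=
    TStructure.t.zero (Y := ((singleFunctor C 0).obj S.X₃)⟦(-1 : ℤ)⟧) g 0 1
  rw [hg, hg₀]
  exact zero_comp

theorem kernel_in_heart_of_connecting_map
    [Abelian C] [HasColimits C] [AB5 C] [HasDerivedCategory.{w} C]
    (hsep : ∃ G : C, IsSeparator G)
    (T F : C → Prop) (htp : IsTorsionPair T F)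
    (S : ShortComplex C) (hS : S.ShortExact)
    (hF : F S.X₁) (hT : T S.X₃)
    -- the torsion subobject `tK` of `K := S.X₂`
    (tK Kbar : C) (j : tK ⟶ S.X₂) (q : S.X₂ ⟶ Kbar) (w : j ≫ q = 0)
    (hse : (ShortComplex.mk j q w).ShortExact)
    (h1 : T tK) (h2 : F Kbar) :
    HeartProp.{w} T F ((singleFunctor C 0).obj S.X₃) ∧
    HeartProp.{w} T F (((singleFunctor C 0).obj S.X₁)⟦(1 : ℤ)⟧) ∧
    HeartProp.{w} T F ((singleFunctor C 0).obj tK) ∧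
    (singleFunctor C 0).map (j ≫ S.g) ≫ hS.singleδ = 0 ∧
    (∀ (Z : DerivedCategory C), HeartProp.{w} T F Z →
      ∀ u : Z ⟶ (singleFunctor C 0).obj S.X₃, u ≫ hS.singleδ = 0 →
        ∃! v : Z ⟶ (singleFunctor C 0).obj tK,
          v ≫ (singleFunctor C 0).map (j ≫ S.g) = u) := by
  have hδ : (singleFunctor C 0).map S.g ≫ hS.singleδ = 0 :=
    Pretriangulated.comp_distTriang_mor_zero₂₃ _ hS.singleTriangle_distinguished
  refine ⟨.singleFunctor_obj htp hT, .singleFunctor_obj_shift htp hF, .singleFunctor_obj htp h1,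
    by rw [Functor.map_comp, Category.assoc, hδ, comp_zero], ?_⟩
  intro Z hZ u hu
  have := hZ.isLE
  obtain ⟨a, ha⟩ : ∃ a : Z ⟶ (singleFunctor C 0).obj S.X₂,
      u = a ≫ (singleFunctor C 0).map S.g :=
    Pretriangulated.Triangle.coyoneda_exact₃ _ hS.singleTriangle_distinguished u hu
  obtain ⟨v, hv⟩ : ∃ v : Z ⟶ (singleFunctor C 0).obj tK, a = v ≫ (singleFunctor C 0).map j :=
    Pretriangulated.Triangle.coyoneda_exact₂ _ hse.singleTriangle_distinguished a
      (hZ.hom_singleFunctor_obj_eq_zero htp h2 _)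
  have hvu : v ≫ (singleFunctor C 0).map (j ≫ S.g) = u := by
    rw [ha, hv, Functor.map_comp, Category.assoc]
  refine ⟨v, hvu, fun v' hv' ↦ ?_⟩
  obtain ⟨b, hb⟩ : ∃ b : Z ⟶ (singleFunctor C 0).obj S.X₁,
      (v' - v) ≫ (singleFunctor C 0).map j = b ≫ (singleFunctor C 0).map S.f :=
    Pretriangulated.Triangle.coyoneda_exact₂ _ hS.singleTriangle_distinguished _ (by
      change ((v' - v) ≫ (singleFunctor C 0).map j) ≫ (singleFunctor C 0).map S.g = 0
      rw [Category.assoc, ← Functor.map_comp, Preadditive.sub_comp, hv', hvu, sub_self])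
  rw [hZ.hom_singleFunctor_obj_eq_zero htp hF b, zero_comp] at hb
  exact sub_eq_zero.1 (hse.eq_zero_of_comp_singleFunctor_map_f_eq_zero (v' - v) hb)
end

section
/- Let G be a Grothendieck category and Q a quasi-cotilting object, i.e. Cogen(Q) = ⊥₁Q ∩ Cogen-bar(Q). Then the class F := Cogen(Q) is closed under direct limits; equivalently, the torsion pair (⊥F, F) is of finite type. -/
/-!
STATEMENT 16: Let `G` be a Grothendieck category and `Q` a quasi-cotilting
object, i.e. `Cogen(Q) = ⊥₁Q ∩ Cogen-bar(Q)`.  Then the class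
`F := Cogen(Q)` is closed under direct limits; equivalently, the associated
torsion pair is of finite type.

`Ext¹(X,Q) = 0` is encoded as the splitting of all short exact sequences
`0 → Q → E → X → 0`.
-/

open CategoryTheory Limits Opposite

universe v u

variable {C : Type u} [Category.{v} C]

section
variable [Abelian C] [HasLimits C] [HasColimits C]

/-- `Cogen Q`: subobjects of products of copies of `Q`. -/
def CogenClass (Q X : C) : Prop :=
  ∃ (ι : Type v) (f : X ⟶ ∏ᶜ (fun _ : ι => Q)), Mono f

/-- `Cogen-bar Q`: quotients of objects of `Cogen Q`. -/
def CogenBarClass (Q X : C) : Prop :=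
  ∃ (N : C), CogenClass Q N ∧ ∃ p : N ⟶ X, Epi p

/-- `Ext¹(X, Q) = 0`, encoded as: every short exact sequence
`0 → Q → E → X → 0` splits. -/
def Ext1VanishesInto (X Q : C) : Prop :=
  ∀ (E : C) (i : Q ⟶ E) (p : E ⟶ X) (w : i ≫ p = 0),
    (ShortComplex.mk i p w).ShortExact → ∃ r : E ⟶ Q, i ≫ r = 𝟙 Q

end

/-- A class of objects is closed under direct (filtered) limits. -/
def ClosedUnderDirectLimits (P : C → Prop) : Prop :=
  ∀ (J : Type v) [SmallCategory J] [IsFiltered J] (D : J ⥤ C),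
    (∀ j : J, P (D.obj j)) →
    ∀ (c : Cocone D), IsColimit c → P c.pt

/-- Finite subsets of `S`, ordered by inclusion. -/
abbrev FinsetIn {A : Type v} (S : Set A) : Type v := {t : Finset A // (t : Set A) ⊆ S}

namespace FinsetIn

variable {A : Type v}

instance (S : Set A) : Nonempty (FinsetIn S) := ⟨⟨∅, by simp⟩⟩

instance (S : Set A) : IsDirectedOrder (FinsetIn S) where
  directed s t := by
    classical
    exact ⟨⟨s.1 ∪ t.1, by simpa using ⟨s.2, t.2⟩⟩, Finset.subset_union_left,
      Finset.subset_union_right⟩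

open Classical in
/-- Intersection with `T`, as a map from finite subsets of `S` to finite subsets of any set `U`
containing `S ∩ T`. -/
noncomputable def inter {S U : Set A} (T : Set A) (h : S ∩ T ⊆ U) (t : FinsetIn S) : FinsetIn U :=
  ⟨t.1.filter (· ∈ T), fun a ha ↦ by
    have ha' : a ∈ t.1 ∧ a ∈ T := by simpa using ha
    exact h ⟨t.2 (by simpa using ha'.1), ha'.2⟩⟩

lemma mem_inter {S U T : Set A} {h : S ∩ T ⊆ U} {t : FinsetIn S} {a : A} :
    a ∈ (inter T h t).1 ↔ a ∈ t.1 ∧ a ∈ T := by simp [inter]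

lemma inter_mono {S U T T' : Set A} {h : S ∩ T ⊆ U} {h' : S ∩ T' ⊆ U} {t t' : FinsetIn S}
    (hT : T ⊆ T') (ht : t ≤ t') : inter T h t ≤ inter T' h' t' := fun a ha ↦ by
  rw [mem_inter] at ha ⊢
  exact ⟨ht ha.1, hT ha.2⟩

end FinsetIn

open FinsetIn

namespace CategoryTheory.ObjectProperty

variable (P : ObjectProperty C) {A : Type v}

lemma IsClosedUnderColimitsOfShape.of_final {J K : Type*} [Category J] [Category K]
    (G : J ⥤ K) [G.Final] [P.IsClosedUnderColimitsOfShape J] :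
    P.IsClosedUnderColimitsOfShape K :=
  ⟨(P.colimitsOfShape_le_of_final G).trans (P.colimitsOfShape_le J)⟩

lemma isClosedUnderColimitsOfShape_finsetIn_insert (a : A) (S : Set A)
    [P.IsClosedUnderColimitsOfShape (FinsetIn S)] :
    P.IsClosedUnderColimitsOfShape (FinsetIn (insert a S)) := by
  classical
  let f : FinsetIn S → FinsetIn (insert a S) := fun t ↦
    ⟨insert a t.1, by simpa using Set.insert_subset_insert t.2⟩
  have hf : Monotone f := fun s t h ↦ Finset.insert_subset_insert a h
  have : hf.functor.Final := hf.final_functor_iff.2 fun t ↦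
    ⟨⟨t.1.erase a, by simpa using t.2⟩, fun x hx ↦ by
      by_cases hxa : x = a <;> simp [f, hxa, hx]⟩
  exact .of_final P hf.functor

lemma isClosedUnderColimitsOfShape_finsetIn_iUnion [HasColimits C] [P.IsClosedUnderIsomorphisms]
    {W : Type v} [LinearOrder W] [Nonempty W] [P.IsClosedUnderColimitsOfShape W]
    (S : W → Set A) (hS : Monotone S)
    (h : ∀ w, P.IsClosedUnderColimitsOfShape (FinsetIn (S w))) :
    P.IsClosedUnderColimitsOfShape (FinsetIn (⋃ w, S w)) := by
  let Φ : W × FinsetIn (⋃ w, S w) ⥤ FinsetIn (⋃ w, S w) :=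
    { obj x := inter (S x.1) Set.inter_subset_left x.2
      map φ := homOfLE (inter_mono (hS (leOfHom φ.1)) (leOfHom φ.2)) }
  have : Φ.Final := Functor.final_of_exists_of_isFiltered _ (fun t ↦ by
    obtain ⟨w, hw⟩ := hS.directed_le.exists_mem_subset_of_finset_subset_biUnion t.2
    refine ⟨(w, t), ⟨homOfLE fun a ha ↦ ?_⟩⟩
    rw [mem_inter]
    exact ⟨ha, hw ha⟩) (fun {_ c} _ _ ↦ ⟨c, 𝟙 _, Subsingleton.elim _ _⟩)
  refine ⟨fun X ⟨p⟩ ↦ ?_⟩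
  let F : W × FinsetIn (⋃ w, S w) ⥤ C := Φ ⋙ p.diag
  refine P.prop_of_iso (?_ : colimit (Functor.curry.obj F ⋙ colim) ≅ X) ?_
  · exact (colimitIsoColimitCurryCompColim F).symm ≪≫
      (Functor.Final.colimitIso Φ p.diag) ≪≫
      (colimit.isColimit _).coconePointUniqueUpToIso p.isColimit
  · refine P.prop_colimit _ fun w ↦ ?_
    let f : FinsetIn (⋃ w, S w) → FinsetIn (S w) := inter (S w) Set.inter_subset_right
    have hf : Monotone f := fun _ _ h ↦ inter_mono le_rfl h
    let g : FinsetIn (S w) → FinsetIn (⋃ w, S w) := fun t ↦ ⟨t.1, t.2.trans (Set.subset_iUnion _ _)⟩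
    have hg : Monotone g := fun _ _ h ↦ h
    have : hf.functor.Final := hf.final_functor_iff.2 fun t ↦ ⟨g t, fun a ha ↦ by
      rw [mem_inter]
      exact ⟨ha, t.2 ha⟩⟩
    let e : (Functor.curry.obj F).obj w ≅ hf.functor ⋙ hg.functor ⋙ p.diag :=
      NatIso.ofComponents (fun _ ↦ Iso.refl _) (fun {s t} φ ↦ (Category.comp_id _).trans
        ((congrArg p.diag.map (Subsingleton.elim _ _)).trans (Category.id_comp _).symm))
    have := h w
    refine P.prop_of_iso (?_ : colimit (hg.functor ⋙ p.diag) ≅ _)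
      (P.prop_colimit _ fun _ ↦ p.prop_diag_obj _)
    exact (Functor.Final.colimitIso hf.functor (hg.functor ⋙ p.diag)).symm ≪≫
      (HasColimit.isoOfNatIso e).symm

lemma isClosedUnderColimitsOfShape_finset_of_wellOrder [HasColimits C]
    [P.IsClosedUnderIsomorphisms]
    (hP : ∀ (W : Type v) [LinearOrder W] [WellFoundedLT W] [Nonempty W],
      P.IsClosedUnderColimitsOfShape W) (A : Type v) :
    P.IsClosedUnderColimitsOfShape (FinsetIn (Set.univ : Set A)) := by
  have h_empty : P.IsClosedUnderColimitsOfShape (FinsetIn (∅ : Set A)) := by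
    have := hP PUnit.{v + 1}
    let f : PUnit.{v + 1} → FinsetIn (∅ : Set A) := fun _ ↦ ⟨∅, by simp⟩
    have hf : Monotone f := fun _ _ _ ↦ le_rfl
    have : hf.functor.Final := hf.final_functor_iff.2 fun t ↦ ⟨⟨⟩, fun _ ha ↦ (t.2 ha).elim⟩
    exact .of_final P hf.functor
  obtain ⟨_, _⟩ := exists_wellFoundedLT A
  have h_union (W T : Set A) (hT : T = ⋃ w : W, Set.Iic w.1)
      (h : ∀ w ∈ W, P.IsClosedUnderColimitsOfShape (FinsetIn (Set.Iic w))) :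
      P.IsClosedUnderColimitsOfShape (FinsetIn T) := by
    subst hT
    obtain rfl | ⟨w, hw⟩ := W.eq_empty_or_nonempty
    · rwa [Set.iUnion_of_empty]
    · have : Nonempty W := ⟨⟨w, hw⟩⟩
      have := hP W
      exact P.isClosedUnderColimitsOfShape_finsetIn_iUnion _
        (fun _ _ h ↦ Set.Iic_subset_Iic.2 h) fun w ↦ h w.1 w.2
  have h_Iic (a : A) : P.IsClosedUnderColimitsOfShape (FinsetIn (Set.Iic a)) := by
    induction a using WellFoundedLT.induction with
    | ind a ih =>
      have := h_union (Set.Iio a) (Set.Iio a) (by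
        ext b
        simpa using ⟨fun hb ↦ ⟨b, hb, le_rfl⟩, fun ⟨c, hc, hb⟩ ↦ hb.trans_lt hc⟩) ih
      rw [← Set.Iio_insert]
      exact P.isClosedUnderColimitsOfShape_finsetIn_insert _ _
  exact h_union Set.univ Set.univ (by ext b; simp) fun w _ ↦ h_Iic w

/-- The finite subsets of a directed order map cofinally to it. -/
lemma exists_monotone_finsetIn_univ (I : Type v) [Preorder I] [IsDirectedOrder I] [Nonempty I] :
    ∃ f : FinsetIn (Set.univ : Set I) → I, Monotone f ∧ ∀ i, ∃ t, i ≤ f t := by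
  classical
  have h_ub (t : Finset I) (g : (s : Finset I) → s ⊂ t → I) :
      ∃ i, (∀ a ∈ t, a ≤ i) ∧ ∀ s hs, g s hs ≤ i := by
    obtain ⟨i, hi⟩ := Finset.exists_le t
    have ⟨j, hj⟩ := Finset.exists_le (t.ssubsets.attach.image
      fun s : {s // s ∈ t.ssubsets} ↦ g s.1 (Finset.mem_ssubsets.1 s.2))
    obtain ⟨k, hik, hjk⟩ := exists_ge_ge i j
    refine ⟨k, fun a ha ↦ (hi a ha).trans hik, fun s hs ↦ (hj _ (Finset.mem_image.2 ?_)).trans hjk⟩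
    exact ⟨⟨s, Finset.mem_ssubsets.2 hs⟩, by simp, rfl⟩
  choose F hF hF' using h_ub
  let f : Finset I → I := Finset.strongInduction F
  have hf (t : Finset I) : f t = F t fun s _ ↦ f s := Finset.strongInduction_eq _ _
  refine ⟨fun t ↦ f t.1, fun s t hst ↦ ?_, fun i ↦ ⟨⟨{i}, by simp⟩, ?_⟩⟩
  · obtain h | h := eq_or_ssubset_of_subset (show s.1 ⊆ t.1 from hst)
    · exact (congrArg f h).le
    · dsimp only
      rw [hf t.1]
      exact hF' t.1 (fun s _ ↦ f s) s.1 h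
  · dsimp only
    rw [hf]
    exact hF _ _ i (by simp)

theorem isClosedUnderColimitsOfShape_of_wellOrder [HasColimits C] [P.IsClosedUnderIsomorphisms]
    (hP : ∀ (W : Type v) [LinearOrder W] [WellFoundedLT W] [Nonempty W],
      P.IsClosedUnderColimitsOfShape W) (J : Type v) [SmallCategory J] [IsFiltered J] :
    P.IsClosedUnderColimitsOfShape J := by
  obtain ⟨I, _, _, _, G, _⟩ := IsFiltered.exists_directed J
  obtain ⟨f, hf, h⟩ := exists_monotone_finsetIn_univ I
  have := hf.final_functor_iff.2 h
  have := isClosedUnderColimitsOfShape_finset_of_wellOrder P hP I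
  exact .of_final P (hf.functor ⋙ G)

end CategoryTheory.ObjectProperty

open Cardinal in
/-- For every well-order `W` there is a tree whose levels are indexed by `W` and which has so many
branches (the subsets of `L`), compared with the number of its nodes, that the sets of branches
cannot be encoded by assigning to each node an element of a set of bounded size. -/
lemma exists_rank_forall_not_injective (W : Type v) [LinearOrder W] [WellFoundedLT W] [Nonempty W]
    (K : Cardinal.{v}) :
    ∃ (L : Type v) (r : L → W), ∀ H : W → Type v, (∀ w, #(H w) ≤ K) →
      ∀ φ : Set (Set L) → ∀ w, Set {x // r x < w} → H w, ¬ Function.Injective φ := by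
  let F (w : W) (g : ∀ v, v < w → Cardinal.{v}) : Cardinal.{v} :=
    max (max ℵ₀ K) (2 ^ Cardinal.sum fun v : Set.Iio w ↦ g v.1 v.2)
  let c : W → Cardinal.{v} := WellFoundedLT.fix F
  have hc (w : W) : c w = max (max ℵ₀ K) (2 ^ Cardinal.sum fun v : Set.Iio w ↦ c v.1) :=
    WellFoundedLT.fix_eq F w
  let L := Σ w, (c w).out
  have hL : #L = Cardinal.sum c := by simp [L]
  have hcL (w : W) : c w ≤ #L := hL ▸ le_sum c w
  obtain ⟨w₀⟩ := ‹Nonempty W›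
  have hL₀ : ℵ₀ ≤ #L := le_trans (by rw [hc w₀]; simp) (hcL w₀)
  have hLK : K ≤ #L := le_trans (by rw [hc w₀]; simp) (hcL w₀)
  refine ⟨L, Sigma.fst, fun H hH φ hφ ↦ ?_⟩
  have h_node (w : W) : #(Set {x : L // x.1 < w}) ≤ c w := by
    let e : {x : L // x.1 < w} → Σ v : Set.Iio w, (c v.1).out := fun x ↦ ⟨⟨x.1.1, x.2⟩, x.1.2⟩
    have he : Function.Injective e := by
      rintro ⟨⟨a, x⟩, hx⟩ ⟨⟨b, y⟩, hy⟩ h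
      simp only [e, Sigma.mk.injEq] at h
      obtain ⟨h, h'⟩ := h
      obtain rfl : a = b := Subtype.mk.inj h
      rw [eq_of_heq h']
    have h := mk_le_of_injective he
    rw [mk_sigma] at h
    simp only [mk_out] at h
    rw [mk_set, hc w]
    exact le_max_of_le_right (power_le_power_left two_ne_zero h)
  have h₁ : #(∀ w, Set {x : L // x.1 < w} → H w) ≤ 2 ^ #L := by
    rw [← power_self_eq hL₀]
    calc #(∀ w, Set {x : L // x.1 < w} → H w)
        = Cardinal.prod fun w ↦ #(H w) ^ #(Set {x : L // x.1 < w}) := by simp [mk_pi]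
      _ ≤ Cardinal.prod fun w ↦ #L ^ c w := prod_le_prod _ _ fun w ↦
          (power_le_power_right ((hH w).trans hLK)).trans
            (power_le_power_left (by simpa using (aleph0_pos.trans_le hL₀).ne') (h_node w))
      _ = #L ^ #L := by rw [hL, ← power_sum]
  have h₂ := (mk_le_of_injective hφ).trans h₁
  rw [mk_set, mk_set] at h₂
  exact (cantor _).not_ge h₂

section Ext
variable [Abelian C] {K Z X Q E : C}

lemma shortExact_kernel_ι (e : Z ⟶ X) [Epi e] :
    (ShortComplex.mk (kernel.ι e) e (kernel.condition e)).ShortExact :=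
  { exact := ShortComplex.exact_kernel e
    mono_f := inferInstanceAs (Mono (kernel.ι e))
    epi_g := ‹Epi e› }

lemma Ext1VanishesInto.exists_extension (h : Ext1VanishesInto X Q) (e : Z ⟶ X) [Epi e]
    (f : kernel e ⟶ Q) : ∃ g : Z ⟶ Q, kernel.ι e ≫ g = f := by
  obtain ⟨p, hp₁, hp₂⟩ : ∃ p : pushout (kernel.ι e) f ⟶ X,
      pushout.inl (kernel.ι e) f ≫ p = e ∧ pushout.inr (kernel.ι e) f ≫ p = 0 :=
    ⟨pushout.desc e 0 (by simp), pushout.inl_desc _ _ _, pushout.inr_desc _ _ _⟩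
  have hS : (ShortComplex.mk _ _ hp₂).ShortExact :=
    { exact := ShortComplex.exact_of_g_is_cokernel _ (CokernelCofork.IsColimit.ofπ _ _
        (fun {A} k hk ↦ (shortExact_kernel_ι e).exact.desc (pushout.inl _ _ ≫ k) (by
          dsimp
          rw [pushout.condition_assoc, hk, comp_zero]))
        (fun {A} k hk ↦ by
          refine pushout.hom_ext ?_ ?_
          · rw [reassoc_of% hp₁]
            exact (shortExact_kernel_ι e).exact.g_desc _ _
          · rw [reassoc_of% hp₂, zero_comp, hk])
        (fun {A} k hk m hm ↦ by
          rw [← cancel_epi e]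
          refine Eq.trans ?_ ((shortExact_kernel_ι e).exact.g_desc _ _).symm
          dsimp at hm ⊢
          rw [← hm, reassoc_of% hp₁]))
      mono_f := inferInstanceAs (Mono (pushout.inr (kernel.ι e) f))
      epi_g := epi_of_epi_fac hp₁ }
  obtain ⟨r, hr⟩ := h _ _ _ hp₂ hS
  exact ⟨pushout.inl _ _ ≫ r, by rw [pushout.condition_assoc, hr, Category.comp_id]⟩

lemma Ext1VanishesInto.exists_lift (h : Ext1VanishesInto Z Q) {i : Q ⟶ E} {p : E ⟶ X}
    {w : i ≫ p = 0} (hS : (ShortComplex.mk i p w).ShortExact) (g : Z ⟶ X) :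
    ∃ s : Z ⟶ E, s ≫ p = g := by
  have : Mono i := hS.mono_f
  have : Epi p := hS.epi_g
  obtain ⟨j, hj₁, hj₂⟩ : ∃ j : Q ⟶ pullback p g,
      j ≫ pullback.fst p g = i ∧ j ≫ pullback.snd p g = 0 :=
    ⟨pullback.lift i 0 (by simp [w]), pullback.lift_fst _ _ _, pullback.lift_snd _ _ _⟩
  have : Mono j := mono_of_mono_fac hj₁
  have hS' : (ShortComplex.mk _ _ hj₂).ShortExact :=
    { exact := ShortComplex.exact_of_f_is_kernel _ (KernelFork.IsLimit.ofι _ _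
        (fun {A} k hk ↦ hS.exact.lift (k ≫ pullback.fst _ _) (by
          dsimp
          rw [Category.assoc, pullback.condition, reassoc_of% hk, zero_comp]))
        (fun {A} k hk ↦ by
          refine pullback.hom_ext ?_ ?_
          · rw [Category.assoc, hj₁]
            exact hS.exact.lift_f _ _
          · rw [Category.assoc, hj₂, comp_zero, hk])
        (fun {A} k hk m hm ↦ by
          rw [← cancel_mono i]
          refine Eq.trans ?_ (hS.exact.lift_f _ _).symm
          dsimp at hm ⊢
          rw [← hm, Category.assoc, hj₁]))
      mono_f := this
      epi_g := inferInstanceAs (Epi (pullback.snd p g)) }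
  obtain ⟨r, hr⟩ := h _ _ _ hj₂ hS'
  have hs := (ShortComplex.Splitting.ofExactOfRetraction _ hS'.exact r hr hS'.epi_g).s_g
  exact ⟨_ ≫ pullback.fst p g, by
    rw [Category.assoc, pullback.condition]
    exact (reassoc_of% hs) g⟩

lemma Ext1VanishesInto.of_extension (h : Ext1VanishesInto Z Q) (e : Z ⟶ X) [Epi e]
    (hf : ∀ f : kernel e ⟶ Q, ∃ g : Z ⟶ Q, kernel.ι e ≫ g = f) : Ext1VanishesInto X Q := by
  intro E i p w hS
  have : Mono i := hS.mono_f
  obtain ⟨s, hs⟩ := h.exists_lift hS e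
  have hks : (kernel.ι e ≫ s) ≫ p = 0 := by simp [hs]
  obtain ⟨g, hg⟩ := hf (hS.exact.lift (kernel.ι e ≫ s) hks)
  have hg' : kernel.ι e ≫ (s - g ≫ i) = 0 := by
    rw [Preadditive.comp_sub, reassoc_of% hg, sub_eq_zero]
    exact (hS.exact.lift_f (kernel.ι e ≫ s) hks).symm
  have hd : e ≫ (shortExact_kernel_ι e).exact.desc (s - g ≫ i) hg' = s - g ≫ i :=
    (shortExact_kernel_ι e).exact.g_desc (s - g ≫ i) hg'
  have hdp : (shortExact_kernel_ι e).exact.desc (s - g ≫ i) hg' ≫ p = 𝟙 X := by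
    rw [← cancel_epi e, reassoc_of% hd]
    simp [hs, w]
  let σ := ShortComplex.Splitting.ofExactOfSection _ hS.exact _ hdp hS.mono_f
  exact ⟨σ.r, σ.f_r⟩

end Ext

section ReducedProduct

variable [HasLimits C] {W : Type v} [LinearOrder W] (Y : W → C)

/-- The functor sending `w` to the product of the `Y v` with `w ≤ v`. -/
noncomputable def tailFunctor : W ⥤ C where
  obj w := ∏ᶜ fun v : Set.Ici w ↦ Y v.1
  map {w _} φ := Pi.lift fun v ↦ Pi.π (fun v : Set.Ici w ↦ Y v.1) ⟨v.1, (leOfHom φ).trans v.2⟩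
  map_id _ := by
    refine Pi.hom_ext _ _ fun v ↦ ?_
    rw [Pi.lift_π, Category.id_comp]
  map_comp _ _ := by
    refine Pi.hom_ext _ _ fun v ↦ ?_
    rw [Pi.lift_π, Category.assoc, Pi.lift_π, Pi.lift_π]

/-- The projection from the product of the `Y v` with `w ≤ v`. -/
noncomputable def tailπ {w v : W} (h : w ≤ v) : (tailFunctor Y).obj w ⟶ Y v :=
  Pi.π (fun v : Set.Ici w ↦ Y v.1) ⟨v, h⟩

variable {Y} in
lemma tail_hom_ext {Z : C} {w : W} {f g : Z ⟶ (tailFunctor Y).obj w}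
    (h : ∀ v (hv : w ≤ v), f ≫ tailπ Y hv = g ≫ tailπ Y hv) : f = g :=
  Pi.hom_ext _ _ fun v ↦ h v.1 v.2

/-- The morphism to the product of the `Y v` with `w ≤ v` given by its components. -/
noncomputable def tailLift {Z : C} {w : W} (f : ∀ v, w ≤ v → (Z ⟶ Y v)) :
    Z ⟶ (tailFunctor Y).obj w :=
  Pi.lift fun v ↦ f v.1 v.2

@[simp]
lemma tailLift_tailπ {Z : C} {w : W} (f : ∀ v, w ≤ v → (Z ⟶ Y v)) {v : W} (h : w ≤ v) :
    tailLift Y f ≫ tailπ Y h = f v h :=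
  Pi.lift_π _ _

@[simp]
lemma tailFunctor_map_tailπ {w w' v : W} (φ : w ⟶ w') (h : w' ≤ v) :
    (tailFunctor Y).map φ ≫ tailπ Y h = tailπ Y ((leOfHom φ).trans h) :=
  Pi.lift_π _ _

/-- The projection from the product of all `Y v` to the product of the `Y v` with `w ≤ v`. -/
noncomputable def toTail (w : W) : ∏ᶜ Y ⟶ (tailFunctor Y).obj w :=
  Pi.lift fun v ↦ Pi.π Y v.1

@[simp]
lemma toTail_tailπ {w v : W} (h : w ≤ v) : toTail Y w ≫ tailπ Y h = Pi.π Y v :=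
  Pi.lift_π _ _

@[simp]
lemma toTail_map {w w' : W} (φ : w ⟶ w') : toTail Y w ≫ (tailFunctor Y).map φ = toTail Y w' :=
  tail_hom_ext fun v hv ↦ by simp

variable [HasColimits C]

/-- The reduced product of the family `Y` with respect to the filter of tails of `W`. -/
noncomputable abbrev reducedProduct : C := colimit (tailFunctor Y)

variable [Nonempty W]

/-- The quotient map from the product to the reduced product. -/
noncomputable def toReducedProduct : ∏ᶜ Y ⟶ reducedProduct Y :=
  toTail Y (Classical.arbitrary W) ≫ colimit.ι (tailFunctor Y) (Classical.arbitrary W)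

@[simp]
lemma toTail_ι (w : W) : toTail Y w ≫ colimit.ι (tailFunctor Y) w = toReducedProduct Y := by
  have h (w w' : W) (hw : w ≤ w') : toTail Y w ≫ colimit.ι (tailFunctor Y) w =
      toTail Y w' ≫ colimit.ι (tailFunctor Y) w' := by
    rw [← colimit.w _ (homOfLE hw), reassoc_of% (toTail_map Y (homOfLE hw))]
  obtain hw | hw := le_total w (Classical.arbitrary W)
  · exact h _ _ hw
  · exact (h _ _ hw).symm

variable [Abelian C]

instance (w : W) : IsSplitEpi (toTail Y w) :=
  ⟨⟨⟨Pi.lift fun v ↦ if h : w ≤ v then tailπ Y h else 0,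
    tail_hom_ext fun v hv ↦ by simp [hv]⟩⟩⟩

instance : Epi (toReducedProduct Y) where
  left_cancellation f g h := colimit.hom_ext fun w ↦ by
    rw [← cancel_epi (toTail Y w), reassoc_of% (toTail_ι Y w), reassoc_of% (toTail_ι Y w), h]

@[simp]
lemma kernel_ι_toReducedProduct (w : W) : kernel.ι (toTail Y w) ≫ toReducedProduct Y = 0 := by
  rw [← toTail_ι Y w, kernel.condition_assoc, zero_comp]

/-- The inclusion of the kernel of the projection to a tail in the kernel of the projection
to the reduced product. -/
noncomputable def kernelToTailι (w : W) : kernel (toTail Y w) ⟶ kernel (toReducedProduct Y) :=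
  kernel.lift _ (kernel.ι _) (kernel_ι_toReducedProduct Y w)

@[simp]
lemma kernelToTailι_ι (w : W) :
    kernelToTailι Y w ≫ kernel.ι (toReducedProduct Y) = kernel.ι (toTail Y w) :=
  kernel.lift_ι _ _ _

lemma sigmaDesc_toReducedProduct :
    (Sigma.desc fun w ↦ kernel.ι (toTail Y w)) ≫ toReducedProduct Y = 0 :=
  Sigma.hom_ext _ _ fun w ↦ by simp

lemma exact_sigmaDesc_toReducedProduct :
    (ShortComplex.mk _ _ (sigmaDesc_toReducedProduct Y)).Exact := by
  have key {A : C} (k : ∏ᶜ Y ⟶ A) (hk : (Sigma.desc fun w ↦ kernel.ι (toTail Y w)) ≫ k = 0)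
      (w : W) : ∃ d, toTail Y w ≫ d = k :=
    ⟨(shortExact_kernel_ι (toTail Y w)).exact.desc k (by
      have := Sigma.ι (fun w ↦ kernel (toTail Y w)) w ≫= hk
      simpa using this), (shortExact_kernel_ι (toTail Y w)).exact.g_desc _ _⟩
  refine ShortComplex.exact_of_g_is_cokernel _ (CokernelCofork.IsColimit.ofπ' _ _
    fun {A} k hk ↦ ?_)
  choose d hd using key k hk
  let c : Cocone (tailFunctor Y) :=
    { pt := A
      ι := { app := d
             naturality := fun w w' φ ↦ by
              rw [← cancel_epi (toTail Y w), reassoc_of% (toTail_map Y φ), hd]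
              simp [hd] } }
  refine ⟨colimit.desc (tailFunctor Y) c, ?_⟩
  dsimp
  rw [← toTail_ι Y (Classical.arbitrary W), Category.assoc, colimit.ι_desc]
  exact hd _

variable {Y} in
lemma kernel_toReducedProduct_hom_ext {Z : C} {f g : kernel (toReducedProduct Y) ⟶ Z}
    (h : ∀ w, kernelToTailι Y w ≫ f = kernelToTailι Y w ≫ g) : f = g := by
  have := (exact_sigmaDesc_toReducedProduct Y).epi_kernelLift
  refine (cancel_epi (kernel.lift (toReducedProduct Y) _
    (sigmaDesc_toReducedProduct Y))).1 (Sigma.hom_ext _ _ fun w ↦ ?_)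
  have hw : Sigma.ι (fun w ↦ kernel (toTail Y w)) w ≫ kernel.lift (toReducedProduct Y) _
      (sigmaDesc_toReducedProduct Y) = kernelToTailι Y w := by
    rw [← cancel_mono (kernel.ι _), Category.assoc, kernel.lift_ι, kernelToTailι_ι, Sigma.ι_desc]
  rw [reassoc_of% hw, reassoc_of% hw, h]

lemma exists_mono_colimit_reducedProduct [AB5 C] (X : W ⥤ C) :
    ∃ f : colimit X ⟶ reducedProduct X.obj, Mono f := by
  let τ : X ⟶ tailFunctor X.obj :=
    { app w := tailLift X.obj fun v hv ↦ X.map (homOfLE hv)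
      naturality w w' φ := tail_hom_ext fun v hv ↦ by
        simp only [Category.assoc, tailFunctor_map_tailπ, tailLift_tailπ]
        rw [← X.map_comp]
        rfl }
  have (w : W) : Mono (τ.app w) := by
    have h : τ.app w ≫ tailπ X.obj (le_refl w) = 𝟙 _ :=
      (tailLift_tailπ X.obj (fun v hv ↦ X.map (homOfLE hv)) (le_refl w)).trans (X.map_id w)
    have : Mono (τ.app w ≫ tailπ X.obj (le_refl w)) := by rw [h]; infer_instance
    exact mono_of_mono _ (tailπ X.obj (le_refl w))
  have := NatTrans.mono_of_mono_app τ
  exact ⟨colim.map τ, inferInstance⟩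

end ReducedProduct

section Coproducts

variable [Abelian C]

lemma sum_sigmaDesc_sigmaι (A : C) (ι : Type*) [Fintype ι] [DecidableEq ι] :
    ∑ j : ι, (Sigma.desc fun k ↦ if k = j then 𝟙 A else 0) ≫ Sigma.ι (fun _ : ι ↦ A) j = 𝟙 _ := by
  refine Sigma.hom_ext _ _ fun k ↦ ?_
  rw [Preadditive.comp_sum, Finset.sum_eq_single k]
  · simp
  · intro j _ hj
    simp [hj.symm]
  · simp

variable [HasColimits C]

/-- The vanishing of a morphism on the kernel of another one, both out of a filtered colimit,
can be checked on the objects of the diagram. -/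
lemma kernel_ι_comp_eq_zero_of_isColimit [AB5 C] {J : Type v} [SmallCategory J] [IsFiltered J]
    {D : J ⥤ C} {c : Cocone D} (hc : IsColimit c) {P R : C} (q : c.pt ⟶ P) (h : c.pt ⟶ R)
    (H : ∀ (j : J) {A : C} (z : A ⟶ D.obj j), z ≫ c.ι.app j ≫ q = 0 → z ≫ c.ι.app j ≫ h = 0) :
    kernel.ι q ≫ h = 0 := by
  have := IsFiltered.isConnected J
  let τ : D ⟶ (Functor.const J).obj P :=
    { app j := c.ι.app j ≫ q
      naturality j j' φ := by simp }
  have hτ (j : J) : (kernel.ι τ).app j ≫ c.ι.app j ≫ q = 0 :=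
    congr_app (kernel.condition τ) j
  let f : colimit (kernel τ) ⟶ c.pt := IsColimit.map (colimit.isColimit _) c (kernel.ι τ)
  have hf (j : J) : colimit.ι (kernel τ) j ≫ f = (kernel.ι τ).app j ≫ c.ι.app j :=
    IsColimit.ι_map _ _ _ _
  have hex := colim.exact_mapShortComplex (ShortComplex.exact_kernel τ) (colimit.isColimit _)
    hc (isColimitConstCocone J P) f q hf
    (fun j ↦ (Category.comp_id _).symm)
  have hfq : f ≫ q = 0 := colimit.hom_ext fun j ↦ by
    rw [reassoc_of% (hf j), hτ j, comp_zero]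
  have hfh : f ≫ h = 0 := colimit.hom_ext fun j ↦ by
    rw [reassoc_of% (hf j), H j _ (hτ j), comp_zero]
  have : Epi (kernel.lift q f hfq) := hex.epi_kernelLift
  rw [← cancel_epi (kernel.lift q f hfq), kernel.lift_ι_assoc, hfh, comp_zero]

variable {I : Type v} {A B : C} (e : A ⟶ B)

lemma sigmaMap_kernel_ι_comp_sigmaMap :
    Limits.Sigma.map (fun _ : I ↦ kernel.ι e) ≫ Limits.Sigma.map (fun _ : I ↦ e) = 0 :=
  Sigma.hom_ext _ _ fun _ ↦ by simp

lemma exact_sigmaMap_kernel_ι [Epi e] :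
    (ShortComplex.mk _ _ (sigmaMap_kernel_ι_comp_sigmaMap (I := I) e)).Exact := by
  have key {T : C} (k : (∐ fun _ : I ↦ A) ⟶ T) (hk : Limits.Sigma.map (fun _ : I ↦ kernel.ι e) ≫ k = 0)
      (i : I) : ∃ d : B ⟶ T, e ≫ d = Sigma.ι (fun _ : I ↦ A) i ≫ k :=
    ⟨(shortExact_kernel_ι e).exact.desc _ (by
      have := Sigma.ι (fun _ : I ↦ kernel e) i ≫= hk
      simpa using this), (shortExact_kernel_ι e).exact.g_desc _ _⟩
  have : Epi (Limits.Sigma.map fun _ : I ↦ e) := inferInstance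
  refine ShortComplex.exact_of_g_is_cokernel _ (CokernelCofork.IsColimit.ofπ' _ _
    fun {T} k hk ↦ ?_)
  choose d hd using key k hk
  exact ⟨Sigma.desc d, Sigma.hom_ext _ _ fun i ↦ by simp [hd]⟩

instance mono_sigmaMap [AB5 C] {A B : I → C} (f : ∀ i, A i ⟶ B i) [∀ i, Mono (f i)] :
    Mono (Limits.Sigma.map f) := by
  have := Abelian.hasFiniteBiproducts (C := C)
  have := AB4.of_AB5 C
  let φ : Discrete.functor A ⟶ Discrete.functor B := Discrete.natTrans fun i ↦ f i.as
  have (i : Discrete I) : Mono (φ.app i) := inferInstanceAs (Mono (f i.as))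
  have := NatTrans.mono_of_mono_app φ
  exact inferInstanceAs (Mono (colim.map φ))

end Coproducts

section Branches

variable [HasLimits C] {W : Type v} [LinearOrder W] (Y : W → C) {L : Type v} (r : L → W)

/-- The nodes of the tree whose branches are the subsets of `L`, where two branches meet at
the level `w` when they contain the same elements of rank less than `w`. -/
abbrev BranchNode : Type v := Σ w : W, Set {x : L // r x < w}

open scoped Classical in
/-- The copy of the product of `Y` along a branch of the tree. -/
noncomputable def branch [HasZeroMorphisms C] (b : Set L) :
    ∏ᶜ Y ⟶ ∏ᶜ fun n : BranchNode r ↦ Y n.1 :=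
  Pi.lift fun n ↦ if Subtype.val ⁻¹' b = n.2 then Pi.π Y n.1 else 0

open scoped Classical in
@[simp]
lemma branch_π [HasZeroMorphisms C] (b : Set L) (n : BranchNode r) :
    branch Y r b ≫ Pi.π _ n = if Subtype.val ⁻¹' b = n.2 then Pi.π Y n.1 else 0 :=
  Pi.lift_π _ _

variable {r} in
lemma exists_forall_ge_eq_of_preimage_eq [NoMaxOrder W] [Nonempty W] {ι : Type*} [Finite ι]
    (β : ι → Set L) (b : Set L) :
    ∃ w, ∀ j, ∀ v ≥ w, (Subtype.val ⁻¹' β j : Set {x // r x < v}) = Subtype.val ⁻¹' b →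
      β j = b := by
  have h (j : ι) : ∃ w, ∀ v ≥ w,
      (Subtype.val ⁻¹' β j : Set {x // r x < v}) = Subtype.val ⁻¹' b → β j = b := by
    by_cases hj : β j = b
    · exact ⟨Classical.arbitrary W, fun _ _ _ ↦ hj⟩
    · obtain ⟨x, hx⟩ : ∃ x, ¬ (x ∈ β j ↔ x ∈ b) := by
        by_contra! h
        exact hj (Set.ext h)
      obtain ⟨w, hw⟩ := exists_gt (r x)
      exact ⟨w, fun v hv h ↦ (hx (Set.ext_iff.1 h ⟨x, hw.trans_le hv⟩)).elim⟩
  choose w hw using h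
  obtain ⟨M, hM⟩ := Finite.exists_le w
  exact ⟨M, fun j v hv ↦ hw j v ((hM j).trans hv)⟩

variable [Abelian C]

lemma kernel_ι_toTail_π {w v : W} (h : w ≤ v) : kernel.ι (toTail Y w) ≫ Pi.π Y v = 0 := by
  rw [← toTail_tailπ Y h, kernel.condition_assoc, zero_comp]

variable {r} in
lemma kernel_ι_toTail_branch {w : W} {b b' : Set L}
    (h : (Subtype.val ⁻¹' b : Set {x // r x < w}) = Subtype.val ⁻¹' b') :
    kernel.ι (toTail Y w) ≫ branch Y r b = kernel.ι (toTail Y w) ≫ branch Y r b' := by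
  refine Pi.hom_ext _ _ fun n ↦ ?_
  rw [Category.assoc, Category.assoc, branch_π, branch_π]
  obtain hn | hn := le_total w n.1
  · split_ifs <;> simp [kernel_ι_toTail_π Y hn]
  · have : (Subtype.val ⁻¹' b : Set {x // r x < n.1}) = Subtype.val ⁻¹' b' :=
      Set.ext fun x ↦ Set.ext_iff.1 h ⟨x.1, x.2.trans_le hn⟩
    rw [this]

variable [HasColimits C]

variable {r Y} in
lemma comp_toReducedProduct_eq_zero [NoMaxOrder W] [Nonempty W] {ι : Type*} [Fintype ι]
    {β : ι → Set L} (hβ : Function.Injective β) {A : C} (z : ι → (A ⟶ ∏ᶜ Y))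
    (hz : ∑ j, z j ≫ branch Y r (β j) = 0) (j : ι) : z j ≫ toReducedProduct Y = 0 := by
  obtain ⟨w, hw⟩ := exists_forall_ge_eq_of_preimage_eq (r := r) β (β j)
  suffices z j ≫ toTail Y w = 0 by rw [← toTail_ι Y w, reassoc_of% this, zero_comp]
  refine tail_hom_ext fun v hv ↦ ?_
  have := hz =≫ Pi.π _ ⟨v, Subtype.val ⁻¹' β j⟩
  rw [Preadditive.sum_comp, Finset.sum_eq_single j] at this
  · simpa using this
  · intro k _ hk
    rw [Category.assoc, branch_π, if_neg fun h ↦ hk (hβ (hw k v hv h)), comp_zero]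
  · simp

/-- The morphism induced by all branches of the tree. -/
noncomputable def branches : (∐ fun _ : Set L ↦ ∏ᶜ Y) ⟶ ∏ᶜ fun n : BranchNode r ↦ Y n.1 :=
  Sigma.desc (branch Y r)

@[simp]
lemma ι_branches (b : Set L) :
    Sigma.ι (fun _ : Set L ↦ ∏ᶜ Y) b ≫ branches Y r = branch Y r b :=
  Sigma.ι_desc _ _

variable {Y r} in
lemma comp_sigmaDesc_sigmaMap_eq_zero [NoMaxOrder W] [Nonempty W] {ι : Type v} [Finite ι]
    {β : ι → Set L} (hβ : Function.Injective β) {A : C} (z : A ⟶ ∐ fun _ : ι ↦ ∏ᶜ Y)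
    (hz : z ≫ Sigma.desc (fun j ↦ Sigma.ι (fun _ : Set L ↦ ∏ᶜ Y) (β j)) ≫
      factorThruImage (branches Y r) = 0) :
    z ≫ Sigma.desc (fun j ↦ Sigma.ι (fun _ : Set L ↦ ∏ᶜ Y) (β j)) ≫
      Limits.Sigma.map (fun _ : Set L ↦ toReducedProduct Y) = 0 := by
  classical
  have := Fintype.ofFinite ι
  let z' (j : ι) : A ⟶ ∏ᶜ Y := z ≫ Sigma.desc fun k ↦ if k = j then 𝟙 _ else 0
  have h : z = ∑ j, z' j ≫ Sigma.ι (fun _ : ι ↦ ∏ᶜ Y) j := by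
    conv_lhs => rw [← Category.comp_id z, ← sum_sigmaDesc_sigmaι, Preadditive.comp_sum]
    simp only [z', Category.assoc]
  have hz' : ∑ j, z' j ≫ branch Y r (β j) = 0 := by
    rw [← zero_comp (f := image.ι (branches Y r)), ← hz]
    conv_rhs => rw [h]
    simp [Preadditive.sum_comp]
  rw [h]
  simp [Preadditive.sum_comp,
    reassoc_of% (comp_toReducedProduct_eq_zero hβ z' hz')]

open CoproductsFromFiniteFiltered in
lemma kernel_ι_branches_comp [AB5 C] [NoMaxOrder W] [Nonempty W] :
    kernel.ι (factorThruImage (branches Y r)) ≫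
      Limits.Sigma.map (fun _ : Set L ↦ toReducedProduct Y) = 0 := by
  refine kernel_ι_comp_eq_zero_of_isColimit
    (isColimitFiniteSubproductsCocone fun _ : Set L ↦ ∏ᶜ Y) _ _ fun S A z hz ↦ ?_
  have hβ : Function.Injective fun j : S ↦ j.1.as := fun i j h ↦
    Subtype.ext (Discrete.ext h)
  exact comp_sigmaDesc_sigmaMap_eq_zero (r := r) hβ z hz

variable {Y} in
open Cardinal in
lemma exists_kernel_ι_toReducedProduct_comp_eq [AB5 C] [WellFoundedLT W] [NoMaxOrder W]
    [Nonempty W] {Q : C} (hQ : ∀ (N : Type v) (g : N → W) (V : C)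
      (m : V ⟶ ∏ᶜ fun n ↦ Y (g n)) [Mono m], Ext1VanishesInto V Q)
    (f : kernel (toReducedProduct Y) ⟶ Q) :
    ∃ g, kernel.ι (toReducedProduct Y) ≫ g = f := by
  classical
  obtain ⟨L, r, hr⟩ := exists_rank_forall_not_injective W
    (Cardinal.sum fun w ↦ #(kernel (toTail Y w) ⟶ Q))
  let e := factorThruImage (branches Y r)
  let i := kernel.ι (toReducedProduct Y)
  let B : C := ∐ fun _ : Set L ↦ kernel (toReducedProduct Y)
  let I : B ⟶ ∐ fun _ : Set L ↦ ∏ᶜ Y := Limits.Sigma.map fun _ ↦ i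
  let j (b : Set L) : kernel (toReducedProduct Y) ⟶ B :=
    Sigma.ι (fun _ : Set L ↦ kernel (toReducedProduct Y)) b
  have hI (b : Set L) : j b ≫ I = i ≫ Sigma.ι (fun _ : Set L ↦ ∏ᶜ Y) b :=
    Sigma.ι_map _ _
  have hV : Ext1VanishesInto (image (branches Y r)) Q := hQ _ _ _ (image.ι (branches Y r))
  obtain ⟨l, hl⟩ : ∃ l : kernel e ⟶ B, l ≫ I = kernel.ι e :=
    have := mono_sigmaMap fun _ : Set L ↦ i
    ⟨(exact_sigmaMap_kernel_ι (I := Set L) (toReducedProduct Y)).lift _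
      (kernel_ι_branches_comp Y r), (exact_sigmaMap_kernel_ι (I := Set L) _).lift_f _ _⟩
  let φ (T : Set (Set L)) : B ⟶ Q := Sigma.desc fun b ↦ if b ∈ T then f else 0
  choose g hg using fun T ↦ hV.exists_extension e (l ≫ φ T)
  let ψ (T : Set (Set L)) : B ⟶ Q := φ T - I ≫ g T
  have hlψ (T) : l ≫ ψ T = 0 := by
    rw [Preadditive.comp_sub, reassoc_of% hl, hg, sub_self]
  have hψ {A : C} (a a' : A ⟶ B) (ha : a ≫ I ≫ branches Y r = a' ≫ I ≫ branches Y r) (T) :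
      a ≫ ψ T = a' ≫ ψ T := by
    have h0 : ((a - a') ≫ I) ≫ e = 0 := by
      rw [← cancel_mono (image.ι (branches Y r))]
      simp only [Category.assoc, e, image.fac, Preadditive.sub_comp, ha, sub_self, zero_comp]
    have : Mono I := mono_sigmaMap fun _ : Set L ↦ i
    have h1 : a - a' = kernel.lift e _ h0 ≫ l := by
      rw [← cancel_mono I, Category.assoc, hl, kernel.lift_ι]
    rw [← sub_eq_zero, ← Preadditive.sub_comp, h1, Category.assoc, hlψ, comp_zero]
  have hψ' {w : W} {b b' : Set L}
      (h : (Subtype.val ⁻¹' b : Set {x // r x < w}) = Subtype.val ⁻¹' b') (T) :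
      kernelToTailι Y w ≫ j b ≫ ψ T =
        kernelToTailι Y w ≫ j b' ≫ ψ T := by
    simpa only [Category.assoc] using hψ (kernelToTailι Y w ≫ j b) (kernelToTailι Y w ≫ j b') (by
      simp only [Category.assoc, reassoc_of% hI, ι_branches, i,
        reassoc_of% (kernelToTailι_ι Y w), kernel_ι_toTail_branch Y h]) T
  obtain ⟨T, T', hTT', hne⟩ : ∃ T T', (fun (w : W) (s : Set {x // r x < w}) ↦ kernelToTailι Y w ≫ j (Subtype.val '' s) ≫ ψ T) =
      (fun (w : W) (s : Set {x // r x < w}) ↦ kernelToTailι Y w ≫ j (Subtype.val '' s) ≫ ψ T') ∧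
      T ≠ T' := by
    have := hr _ (fun w ↦ Cardinal.le_sum (fun w ↦ #(kernel (toTail Y w) ⟶ Q)) w)
      fun T w s ↦ kernelToTailι Y w ≫ j (Subtype.val '' s) ≫ ψ T
    simpa only [Function.Injective, not_forall, exists_prop] using this
  have key (b : Set L) : j b ≫ ψ T =
      j b ≫ ψ T' := by
    refine kernel_toReducedProduct_hom_ext fun w ↦ ?_
    have hb : (Subtype.val ⁻¹' b : Set {x // r x < w}) =
        Subtype.val ⁻¹' (Subtype.val '' (Subtype.val ⁻¹' b : Set {x // r x < w})) :=
      (Set.preimage_image_eq _ Subtype.val_injective).symm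
    rw [hψ' hb, hψ' hb]
    exact congr_fun (congr_fun hTT' w) _
  have hιψ (b : Set L) (T) : j b ≫ ψ T =
      (if b ∈ T then f else 0) - i ≫ Sigma.ι (fun _ : Set L ↦ ∏ᶜ Y) b ≫ g T := by
    rw [Preadditive.comp_sub, reassoc_of% (hI b)]
    exact congrArg (· - _) (Sigma.ι_desc _ _)
  obtain ⟨b, hb⟩ : ∃ b, ¬ (b ∈ T ↔ b ∈ T') := by
    by_contra! h
    exact hne (Set.ext h)
  have hT := key b
  rw [hιψ, hιψ] at hT
  by_cases hbT : b ∈ T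
  · rw [if_pos hbT, if_neg fun h ↦ hb (iff_of_true hbT h)] at hT
    refine ⟨Sigma.ι (fun _ : Set L ↦ ∏ᶜ Y) b ≫ (g T - g T'), ?_⟩
    rw [zero_sub, sub_eq_iff_eq_add, neg_add_eq_sub] at hT
    simp only [Preadditive.comp_sub, hT, i]
  · have hbT' : b ∈ T' := by
      by_contra h
      exact hb (iff_of_false hbT h)
    rw [if_neg hbT, if_pos hbT'] at hT
    refine ⟨Sigma.ι (fun _ : Set L ↦ ∏ᶜ Y) b ≫ (g T' - g T), ?_⟩
    rw [zero_sub, eq_sub_iff_add_eq, neg_add_eq_sub] at hT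
    simp only [Preadditive.comp_sub, ← hT, i]

end Branches

section Cogen

variable [HasLimits C] {Q : C}

lemma CogenClass.of_mono {X Y : C} (h : CogenClass Q Y) (m : X ⟶ Y) [Mono m] : CogenClass Q X := by
  obtain ⟨ι, f, hf⟩ := h
  exact ⟨ι, m ≫ f, mono_comp m f⟩

lemma CogenClass.pi {N : Type v} {Y : N → C} (h : ∀ n, CogenClass Q (Y n)) :
    CogenClass Q (∏ᶜ Y) := by
  choose ι f hf using h
  refine ⟨Σ n, ι n, Pi.lift fun p ↦ Pi.π Y p.1 ≫ f p.1 ≫ Pi.π _ p.2, ⟨fun {Z} a b hab ↦ ?_⟩⟩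
  refine Pi.hom_ext _ _ fun n ↦ (cancel_mono (f n)).1 (Pi.hom_ext _ _ fun k ↦ ?_)
  simpa using hab =≫ Pi.π _ ⟨n, k⟩

variable [Abelian C] [HasColimits C]

instance : ObjectProperty.IsClosedUnderIsomorphisms (CogenClass Q) where
  of_iso e h := h.of_mono e.inv

lemma CogenClass.reducedProduct [AB5 C]
    (hQ : ∀ X : C, CogenClass Q X ↔ (Ext1VanishesInto X Q ∧ CogenBarClass Q X))
    {W : Type v} [LinearOrder W] [WellFoundedLT W] [NoMaxOrder W] [Nonempty W] {Y : W → C}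
    (hY : ∀ w, CogenClass Q (Y w)) : CogenClass Q (reducedProduct Y) := by
  have h : CogenClass Q (∏ᶜ Y) := .pi hY
  refine (hQ _).2 ⟨((hQ _).1 h).1.of_extension (toReducedProduct Y)
    (exists_kernel_ι_toReducedProduct_comp_eq fun N g V m _ ↦ ?_), _, h, toReducedProduct Y,
      inferInstance⟩
  exact ((hQ _).1 ((CogenClass.pi fun n ↦ hY (g n)).of_mono m)).1

lemma CogenClass.colimit_of_wellOrder [AB5 C]
    (hQ : ∀ X : C, CogenClass Q X ↔ (Ext1VanishesInto X Q ∧ CogenBarClass Q X))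
    {W : Type v} [LinearOrder W] [WellFoundedLT W] [Nonempty W] (X : W ⥤ C)
    (hX : ∀ w, CogenClass Q (X.obj w)) : CogenClass Q (colimit X) := by
  by_cases hW : ∃ w : W, IsMax w
  · obtain ⟨w, hw⟩ := hW
    have hT : IsTerminal w := IsTerminal.ofUniqueHom
      (fun v ↦ homOfLE (hw.isTop v)) fun _ _ ↦ Subsingleton.elim _ _
    have := isIso_ι_of_isTerminal hT X
    exact (hX w).of_mono (inv (colimit.ι X w))
  · push Not at hW
    have : NoMaxOrder W := ⟨fun w ↦ not_isMax_iff.1 (hW w)⟩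
    obtain ⟨f, hf⟩ := exists_mono_colimit_reducedProduct X
    exact (CogenClass.reducedProduct hQ hX).of_mono f

end Cogen

theorem quasiCotilting_finiteType
    [Abelian C] [HasColimits C] [HasLimits C] [AB5 C]
    (hsep : ∃ G : C, IsSeparator G)
    (Q : C)
    -- `Q` is quasi-cotilting : `Cogen(Q) = ⊥₁Q ∩ Cogen-bar(Q)`
    (hQ : ∀ X : C, CogenClass Q X ↔ (Ext1VanishesInto X Q ∧ CogenBarClass Q X)) :
    ClosedUnderDirectLimits (CogenClass Q) := by
  have h := ObjectProperty.isClosedUnderColimitsOfShape_of_wellOrder (CogenClass Q)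
    fun W _ _ _ ↦ .mk' (by
      rintro _ ⟨X, hX⟩
      exact CogenClass.colimit_of_wellOrder hQ X hX)
  intro J _ _ D hD c hc
  exact (h J).colimitsOfShape_le _ ⟨⟨⟨D, c.ι, hc⟩, hD⟩⟩
end
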